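/- Let Γ be a set with at least two elements and let Y be the real vector space of all bounded real-valued functions on Γ, ordered by: f ≤ g if and only if either f = g or inf_{t∈Γ} (g(t) − f(t)) > 0. Then Y is not Archimedean; in fact, for every f ∈ Y with 0 ≤ f and f ≠ 0, the set {(1/n)·f : n ∈ ℕ, n ≥ 1} has no infimum in Y. -/

import Mathlib

/-- The order on the space of bounded real functions on `Γ`:
`f ≤ g` iff `f = g` or `inf_{t ∈ Γ} (g t - f t) > 0`. -/
def strongLe {Γ : Type*} (f g : Γ → ℝ) : Prop :=
  f = g ∨ 0 < ⨅ t : Γ, (g t - f t)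

/-!
For `f` above a positive constant, the lower bounds of `{f / n}` are exactly the pointwise
nonpositive functions, so an infimum could only be `0`. But the negative of the indicator of one
point is pointwise nonpositive and vanishes at a second point, so `strongLe` does not put it below
`0`. It also violates the Archimedean property, since its positive multiples all lie below the
constant `1`.
-/

/-- `g` exceeds `f` by a positive constant: the strict part of `strongLe` on a nonempty `Γ`, with
the infimum replaced by an explicit gap so that the junk value `0` of `⨅` plays no role. -/
def UniformLT {Γ : Type*} (f g : Γ → ℝ) : Prop :=
  ∃ ε > 0, ∀ t, f t + ε ≤ g t

section

variable {Γ : Type*} {f g h : Γ → ℝ}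

theorem UniformLT.lt_apply (hfg : UniformLT f g) (t : Γ) : f t < g t := by
  obtain ⟨ε, hε, hgap⟩ := hfg
  exact (lt_add_of_pos_right _ hε).trans_le (hgap t)

theorem uniformLT_of_le_of_uniformLT (hfg : f ≤ g) (hgh : UniformLT g h) : UniformLT f h := by
  obtain ⟨ε, hε, hgap⟩ := hgh
  exact ⟨ε, hε, fun t => (add_le_add_left (hfg t) ε).trans (hgap t)⟩

theorem UniformLT.smul {c : ℝ} (hc : 0 < c) (hfg : UniformLT f g) :
    UniformLT (c • f) (c • g) := by
  obtain ⟨ε, hε, hgap⟩ := hfg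
  refine ⟨c * ε, mul_pos hc hε, fun t => ?_⟩
  simpa only [Pi.smul_apply, smul_eq_mul, mul_add] using mul_le_mul_of_nonneg_left (hgap t) hc.le

theorem uniformLT_zero_one : UniformLT (0 : Γ → ℝ) 1 :=
  ⟨1, one_pos, fun _ => by simp⟩

theorem iInf_sub_pos_iff_uniformLT [Nonempty Γ] :
    0 < ⨅ t, (g t - f t) ↔ UniformLT f g := by
  constructor
  · intro hpos
    have hbdd : BddBelow (Set.range fun t => g t - f t) := by
      by_contra hunbdd
      exact hpos.ne' (Real.iInf_of_not_bddBelow hunbdd)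
    exact ⟨_, hpos, fun t => le_sub_iff_add_le'.mp (ciInf_le hbdd t)⟩
  · rintro ⟨ε, hε, hgap⟩
    exact hε.trans_le (le_ciInf fun t => le_sub_iff_add_le'.mpr (hgap t))

theorem strongLe_iff_eq_or_uniformLT : strongLe f g ↔ f = g ∨ UniformLT f g := by
  cases isEmpty_or_nonempty Γ
  · have heq : f = g := Subsingleton.elim f g
    exact iff_of_true (.inl heq) (.inl heq)
  · exact or_congr_right iInf_sub_pos_iff_uniformLT

theorem UniformLT.strongLe (hfg : UniformLT f g) : strongLe f g :=
  strongLe_iff_eq_or_uniformLT.mpr (.inr hfg)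

theorem strongLe.le (hfg : strongLe f g) : f ≤ g := by
  rcases strongLe_iff_eq_or_uniformLT.mp hfg with heq | hlt
  · exact heq.le
  · exact fun t => (hlt.lt_apply t).le

theorem strongLe.eq_of_apply_eq (hfg : strongLe f g) {t : Γ} (ht : f t = g t) : f = g :=
  (strongLe_iff_eq_or_uniformLT.mp hfg).resolve_right fun hlt => (hlt.lt_apply t).ne ht

theorem forall_strongLe_inv_smul_iff_nonpos (hf : UniformLT 0 f) :
    (∀ n : ℕ, 1 ≤ n → strongLe g ((n : ℝ)⁻¹ • f)) ↔ g ≤ 0 := by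
  constructor
  · intro hg t
    have hlim : Filter.Tendsto (fun n : ℕ => (n : ℝ)⁻¹ * f t) Filter.atTop (nhds 0) := by
      simpa only [zero_mul] using (tendsto_inv_atTop_nhds_zero_nat (𝕜 := ℝ)).mul_const (f t)
    refine ge_of_tendsto hlim ?_
    filter_upwards [Filter.eventually_ge_atTop 1] with n hn using (hg n hn).le t
  · intro hg n hn
    have hn_inv : (0 : ℝ) < (n : ℝ)⁻¹ := inv_pos.mpr (Nat.cast_pos.mpr hn)
    have hgap : UniformLT 0 ((n : ℝ)⁻¹ • f) := by simpa only [smul_zero] using hf.smul hn_inv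
    exact (uniformLT_of_le_of_uniformLT hg hgap).strongLe

theorem exists_bounded_nonpos_not_strongLe_zero [Nontrivial Γ] :
    ∃ y : Γ → ℝ, (∃ C : ℝ, ∀ t, |y t| ≤ C) ∧ y ≤ 0 ∧ ¬ strongLe y 0 := by
  classical
  obtain ⟨a, b, hab⟩ := exists_pair_ne Γ
  refine ⟨-Pi.single a 1, ⟨1, fun t => ?_⟩, ?_, fun hle => ?_⟩
  · by_cases ht : t = a <;> simp [ht]
  · exact neg_nonpos.mpr (Pi.single_nonneg.mpr zero_le_one)
  · have hb : (-Pi.single a 1 : Γ → ℝ) b = (0 : Γ → ℝ) b := by simp [hab.symm]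
    simpa using congrFun (hle.eq_of_apply_eq hb) a

theorem not_exists_strongLe_greatest_bounded_nonpos [Nontrivial Γ] :
    ¬ ∃ g : Γ → ℝ, g ≤ 0 ∧
      ∀ w : Γ → ℝ, (∃ C : ℝ, ∀ t, |w t| ≤ C) → w ≤ 0 → strongLe w g := by
  rintro ⟨g, hg_nonpos, hg_greatest⟩
  have hg_nonneg : 0 ≤ g := (hg_greatest 0 ⟨0, fun t => by simp⟩ le_rfl).le
  obtain rfl : g = 0 := le_antisymm hg_nonpos hg_nonneg
  obtain ⟨y, hy_bdd, hy_nonpos, hy⟩ := exists_bounded_nonpos_not_strongLe_zero (Γ := Γ)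
  exact hy (hg_greatest y hy_bdd hy_nonpos)

end

/-- Let `Γ` have at least two elements and order the bounded real functions
on `Γ` by `f ≤ g` iff `f = g` or `inf_t (g t - f t) > 0`. This space is not Archimedean;
in fact, for every bounded `f` with `0 ≤ f` and `f ≠ 0`, the set
`{(1/n) • f : n ∈ ℕ, n ≥ 1}` has no infimum among the bounded functions. -/
theorem strongLe_not_archimedean
    {Γ : Type*} (hΓ : ∃ a b : Γ, a ≠ b) :
    (¬ ∀ f y : Γ → ℝ, (∃ C : ℝ, ∀ t : Γ, |f t| ≤ C) → (∃ C : ℝ, ∀ t : Γ, |y t| ≤ C) →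
        strongLe 0 f → (∀ n : ℕ, 1 ≤ n → strongLe ((n : ℝ) • y) f) → strongLe y 0) ∧
    (∀ f : Γ → ℝ, (∃ C : ℝ, ∀ t : Γ, |f t| ≤ C) → strongLe 0 f → f ≠ 0 →
      ¬ ∃ g : Γ → ℝ, (∃ C : ℝ, ∀ t : Γ, |g t| ≤ C) ∧
        (∀ n : ℕ, 1 ≤ n → strongLe g ((n : ℝ)⁻¹ • f)) ∧
        (∀ w : Γ → ℝ, (∃ C : ℝ, ∀ t : Γ, |w t| ≤ C) →
          (∀ n : ℕ, 1 ≤ n → strongLe w ((n : ℝ)⁻¹ • f)) → strongLe w g)) := by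
  have : Nontrivial Γ := ⟨hΓ⟩
  constructor
  · intro archimedean
    obtain ⟨y, hy_bdd, hy_nonpos, hy⟩ := exists_bounded_nonpos_not_strongLe_zero (Γ := Γ)
    refine hy (archimedean 1 y ⟨1, fun t => by simp⟩ hy_bdd uniformLT_zero_one.strongLe ?_)
    intro n _
    have hny : (n : ℝ) • y ≤ 0 := smul_nonpos_of_nonneg_of_nonpos n.cast_nonneg hy_nonpos
    exact (uniformLT_of_le_of_uniformLT hny uniformLT_zero_one).strongLe
  · rintro f - hf hf_ne ⟨g, -, hg_lower, hg_greatest⟩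
    have hf_pos : UniformLT 0 f :=
      (strongLe_iff_eq_or_uniformLT.mp hf).resolve_left hf_ne.symm
    refine not_exists_strongLe_greatest_bounded_nonpos
      ⟨g, (forall_strongLe_inv_smul_iff_nonpos hf_pos).mp hg_lower, fun w hw_bdd hw => ?_⟩
    exact hg_greatest w hw_bdd ((forall_strongLe_inv_smul_iff_nonpos hf_pos).mpr hw)
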